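/- Let V ⊆ F_q^n be a linear code with relative minimum distance λ. Let ε, δ > 0 with ε < 1/3 and δ < 1 - (1-λ+ε)^{1/3}. If u* ∈ F_q^n satisfies Δ(u*, V) > δ + ε (relative Hamming distance), then for every u ∈ F_q^n, there are at most 2/ε² values of x ∈ F_q such that Δ(u* + x·u, V) < δ. -/

import Mathlib

open Finset
open scoped Classical

/-- Relative Hamming distance between two functions on a finite domain. -/
noncomputable def relDist {D F : Type*} [Fintype D] (u v : D → F) : ℝ :=
  ((Finset.univ.filter (fun i => u i ≠ v i)).card : ℝ) / (Fintype.card D)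

/-!
For each bad `x` pick a codeword `w x` at distance less than `δ` from `ustar + x • u`, and let `S x`
be the set of coordinates where the two agree, so that `S x` has density greater than `1 - δ`. By
convexity of the cube, `S x ∩ S y ∩ S z` has average density at least `(1 - δ) ^ 3 ≥ 1 - lam + ε`
over all triples of bad points. On the other hand, if `x ≠ y` and the density of `S x ∩ S y ∩ S z`
exceeds `1 - lam`, then `w z` lies on the line of codewords through `w x` and `w y`, because it
agrees with that line in more than `1 - lam` of the coordinates. A line of codewords stays within
`δ` of the line `ustar + x • u` for at most `1 / ε` values of `x`: in a coordinate where the two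
lines start from different points they meet at most once, and `ustar` is `(δ + ε)`-far from the
code. Comparing the two estimates bounds the number of bad points.
-/

section Counting

variable {α ι : Type*}

theorem finite_and_ncard_le_of_forall_finset_card_le {s : Set α} {B : ℝ}
    (h : ∀ t : Finset α, ↑t ⊆ s → (#t : ℝ) ≤ B) : s.Finite ∧ (s.ncard : ℝ) ≤ B := by
  have hs : s.Finite := by
    by_contra hinf
    obtain ⟨t, hts, ht⟩ := Set.Infinite.exists_subset_card_eq hinf (⌊B⌋₊ + 1)
    have hlt : B < #t := by rw [ht]; exact_mod_cast Nat.lt_floor_add_one B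
    exact hlt.not_ge (h t hts)
  refine ⟨hs, ?_⟩
  rw [Set.ncard_eq_toFinset_card s hs]
  exact h _ hs.coe_toFinset.subset

theorem sum_le_card_mul_add_card_filter_mul (s : Finset α) {f : α → ℝ} {c M : ℝ} (hc : 0 ≤ c)
    (hM : ∀ x ∈ s, f x ≤ M) : ∑ x ∈ s, f x ≤ #s * c + #{x ∈ s | c < f x} * M := by
  calc ∑ x ∈ s, f x ≤ ∑ x ∈ s, (c + if c < f x then M else 0) := by
        refine sum_le_sum fun x hx => ?_
        split_ifs with h
        · linarith [hM x hx]
        · linarith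
    _ = #s * c + #{x ∈ s | c < f x} * M := by
        rw [sum_add_distrib, ← sum_filter, sum_const, sum_const, nsmul_eq_mul, nsmul_eq_mul]

theorem sum_sum_le_of_diag_of_offDiag (s : Finset α) {f : α → α → ℝ} {A B : ℝ} (hB : 0 ≤ B)
    (hdiag : ∀ x ∈ s, f x x ≤ A) (hoff : ∀ x ∈ s, ∀ y ∈ s, x ≠ y → f x y ≤ B) :
    ∑ x ∈ s, ∑ y ∈ s, f x y ≤ #s * A + #s ^ 2 * B := by
  calc ∑ x ∈ s, ∑ y ∈ s, f x y ≤ ∑ x ∈ s, ∑ y ∈ s, ((if x = y then A else 0) + B) := by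
        refine sum_le_sum fun x hx => sum_le_sum fun y hy => ?_
        split_ifs with h
        · subst h
          linarith [hdiag x hx]
        · linarith [hoff x hx y hy h]
    _ = ∑ _ ∈ s, (A + #s * B) := by
        refine sum_congr rfl fun _ hx => ?_
        rw [sum_add_distrib, sum_ite_eq, if_pos hx, sum_const, nsmul_eq_mul]
    _ = #s * A + #s ^ 2 * B := by
        rw [sum_const, nsmul_eq_mul]
        ring

variable [Fintype ι]

theorem sum_card_eq_sum_card_filter_mem (T : Finset α) (S : α → Finset ι) :
    ∑ x ∈ T, #(S x) = ∑ i, #{x ∈ T | i ∈ S x} := by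
  simpa [bipartiteAbove, bipartiteBelow] using
    sum_card_bipartiteAbove_eq_sum_card_bipartiteBelow (fun x i => i ∈ S x) (s := T) (t := univ)

theorem sum_card_inter_inter_eq_sum_pow_three (T : Finset α) (S : α → Finset ι) :
    ∑ x ∈ T, ∑ y ∈ T, ∑ z ∈ T, #(S x ∩ S y ∩ S z) = ∑ i, #{x ∈ T | i ∈ S x} ^ 3 := by
  calc ∑ x ∈ T, ∑ y ∈ T, ∑ z ∈ T, #(S x ∩ S y ∩ S z)
      = ∑ t ∈ T ×ˢ T ×ˢ T, #(S t.1 ∩ S t.2.1 ∩ S t.2.2) := by simp only [sum_product]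
    _ = ∑ i, #{t ∈ T ×ˢ T ×ˢ T | i ∈ S t.1 ∩ S t.2.1 ∩ S t.2.2} :=
        sum_card_eq_sum_card_filter_mem _ _
    _ = ∑ i, #{x ∈ T | i ∈ S x} ^ 3 := by
        refine sum_congr rfl fun i _ => ?_
        simp only [mem_inter, and_assoc]
        rw [filter_product (fun x => i ∈ S x) (fun p : α × α => i ∈ S p.1 ∧ i ∈ S p.2),
          filter_product (fun x => i ∈ S x) (fun x => i ∈ S x), card_product, card_product]
        ring

theorem sum_card_pow_three_le [Nonempty ι] (T : Finset α) (S : α → Finset ι) :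
    ((∑ x ∈ T, #(S x) : ℕ) : ℝ) ^ 3 ≤
      (Fintype.card ι : ℝ) ^ 2 * ∑ x ∈ T, ∑ y ∈ T, ∑ z ∈ T, (#(S x ∩ S y ∩ S z) : ℝ) := by
  have hcard : (0 : ℝ) < Fintype.card ι := Nat.cast_pos.2 Fintype.card_pos
  have hmean := pow_sum_div_card_le_sum_pow (s := univ)
    (f := fun i => (#{x ∈ T | i ∈ S x} : ℝ)) (fun _ _ => Nat.cast_nonneg _) 2
  rw [card_univ, div_le_iff₀' (pow_pos hcard 2)] at hmean
  rw [sum_card_eq_sum_card_filter_mem]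
  have htriple := sum_card_inter_inter_eq_sum_pow_three T S
  apply_fun (Nat.cast : ℕ → ℝ) at htriple
  push_cast at htriple ⊢
  rwa [htriple]

end Counting

section Agreement

variable {ι E : Type*} [Fintype ι]

/-- The coordinates in which two words agree; its density is one minus the relative Hamming
distance. -/
noncomputable def agreeSet (u v : ι → E) : Finset ι := {i | u i = v i}

theorem mem_agreeSet {u v : ι → E} {i : ι} : i ∈ agreeSet u v ↔ u i = v i := by
  simp [agreeSet]

theorem card_agreeSet [Nonempty ι] (u v : ι → E) :
    (#(agreeSet u v) : ℝ) = (1 - relDist u v) * Fintype.card ι := by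
  have hsplit := card_filter_add_card_filter_not (s := (univ : Finset ι)) (fun i => u i = v i)
  apply_fun (Nat.cast : ℕ → ℝ) at hsplit
  rw [Nat.cast_add, card_univ] at hsplit
  rw [relDist, agreeSet, sub_mul, div_mul_cancel₀ _ (Nat.cast_ne_zero.2 Fintype.card_ne_zero)]
  linarith

theorem relDist_le_one (u v : ι → E) : relDist u v ≤ 1 :=
  div_le_one_of_le₀ (Nat.cast_le.2 (card_le_univ _)) (Nat.cast_nonneg _)

end Agreement

section Lines

variable {K M : Type*} [DivisionRing K] [AddCommGroup M] [Module K M]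

theorem eq_and_eq_of_add_smul_eq_of_ne {a b c d : M} {x y : K} (hxy : x ≠ y)
    (hx : a + x • b = c + x • d) (hy : a + y • b = c + y • d) : a = c ∧ b = d := by
  have hdiff {s : K} (hs : a + s • b = c + s • d) : s • (b - d) = c - a := by
    rw [smul_sub, sub_eq_sub_iff_add_eq_add, add_comm, hs]
  have hsmul : (x - y) • (b - d) = 0 := by
    rw [sub_smul, hdiff hx, hdiff hy, sub_self]
  have hbd : b = d :=
    sub_eq_zero.1 ((smul_eq_zero.1 hsmul).resolve_left (sub_ne_zero.2 hxy))
  subst hbd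
  exact ⟨add_right_cancel hx, rfl⟩

theorem exists_add_smul_eq_of_ne (V : Submodule K M) {p q : M} (hp : p ∈ V) (hq : q ∈ V)
    {x y : K} (hxy : x ≠ y) : ∃ a ∈ V, ∃ b ∈ V, a + x • b = p ∧ a + y • b = q := by
  have hb : (x - y)⁻¹ • (p - q) ∈ V := V.smul_mem _ (V.sub_mem hp hq)
  have hslope : (x - y) • (x - y)⁻¹ • (p - q) = p - q := smul_inv_smul₀ (sub_ne_zero.2 hxy) _
  refine ⟨p - x • (x - y)⁻¹ • (p - q), V.sub_mem hp (V.smul_mem x hb), _, hb,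
    sub_add_cancel _ _, ?_⟩
  rw [sub_smul] at hslope
  rw [sub_add, hslope, sub_sub_cancel]

variable {ι E : Type*} [Fintype ι] [AddCommGroup E] [Module K E]

theorem sum_card_agreeSet_add_smul_le (T : Finset K) (a b c d : ι → E) :
    ∑ x ∈ T, #(agreeSet (a + x • b) (c + x • d)) ≤ #T * #(agreeSet a c) + Fintype.card ι := by
  calc ∑ x ∈ T, #(agreeSet (a + x • b) (c + x • d))
      = ∑ i, #{x ∈ T | i ∈ agreeSet (a + x • b) (c + x • d)} :=
        sum_card_eq_sum_card_filter_mem _ _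
    _ ≤ ∑ i, ((if i ∈ agreeSet a c then #T else 0) + 1) := by
        refine sum_le_sum fun i _ => ?_
        split_ifs with hi
        · exact (card_filter_le _ _).trans (Nat.le_succ _)
        · rw [zero_add, card_le_one]
          simp only [mem_filter, mem_agreeSet, Pi.add_apply, Pi.smul_apply] at hi ⊢
          rintro x ⟨-, hx⟩ y ⟨-, hy⟩
          by_contra hxy
          exact hi (eq_and_eq_of_add_smul_eq_of_ne hxy hx hy).1
    _ = #T * #(agreeSet a c) + Fintype.card ι := by
        simp [sum_add_distrib, mul_comm]

theorem card_mul_le_one_of_relDist_add_smul_lt [Nonempty ι] {T : Finset K} {a b c d : ι → E}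
    {δ ε : ℝ} (hfar : δ + ε < relDist a c)
    (hclose : ∀ x ∈ T, relDist (a + x • b) (c + x • d) < δ) : #T * ε ≤ 1 := by
  have hcard : (0 : ℝ) < Fintype.card ι := Nat.cast_pos.2 Fintype.card_pos
  refine le_of_mul_le_mul_right ?_ hcard
  have hlower : #T * ((1 - δ) * Fintype.card ι) ≤
      ∑ x ∈ T, (#(agreeSet (a + x • b) (c + x • d)) : ℝ) := by
    rw [← nsmul_eq_mul]
    refine card_nsmul_le_sum _ _ _ fun x hx => ?_
    rw [card_agreeSet]
    gcongr
    exact (hclose x hx).le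
  have hupper : ∑ x ∈ T, (#(agreeSet (a + x • b) (c + x • d)) : ℝ) ≤
      #T * #(agreeSet a c) + Fintype.card ι := by
    exact_mod_cast sum_card_agreeSet_add_smul_le T a b c d
  have hstart : (#(agreeSet a c) : ℝ) ≤ (1 - (δ + ε)) * Fintype.card ι := by
    rw [card_agreeSet]
    gcongr
  have hstart_mul := mul_le_mul_of_nonneg_left hstart (Nat.cast_nonneg (α := ℝ) #T)
  linarith

end Lines

section Code

variable {K E ι : Type*} [DivisionRing K] [AddCommGroup E] [Module K E] [Fintype ι]

/-- The coordinates in which the point `a + x • b` of a line agrees with the word `w x` assigned to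
its parameter; for `w x` a codeword close to the point this is the set `S x` of the proof idea. -/
noncomputable def lineAgreeSet (a b : ι → E) (w : K → ι → E) (x : K) : Finset ι :=
  agreeSet (a + x • b) (w x)

theorem mem_lineAgreeSet {a b : ι → E} {w : K → ι → E} {x : K} {i : ι} :
    i ∈ lineAgreeSet a b w x ↔ a i + x • b i = w x i :=
  mem_agreeSet

theorem lineAgreeSet_inter_inter_subset {a b c d : ι → E} {w : K → ι → E} {x y : K} (hxy : x ≠ y)
    (hx : c + x • d = w x) (hy : c + y • d = w y) (z : K) :
    lineAgreeSet a b w x ∩ lineAgreeSet a b w y ∩ lineAgreeSet a b w z ⊆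
      agreeSet (w z) (c + z • d) := by
  intro i
  simp only [mem_inter, mem_lineAgreeSet, mem_agreeSet, ← hx, ← hy, Pi.add_apply, Pi.smul_apply]
  rintro ⟨⟨hxi, hyi⟩, hzi⟩
  obtain ⟨hac, hbd⟩ := eq_and_eq_of_add_smul_eq_of_ne hxy hxi hyi
  rw [← hzi, hac, hbd]

variable [Nonempty ι] {V : Submodule K (ι → E)} {lam ε δ : ℝ} {a b : ι → E}
  {T : Finset K} {w : K → ι → E}

theorem eq_of_lt_card_agreeSet (hlam : ∀ v ∈ V, ∀ v' ∈ V, v ≠ v' → lam ≤ relDist v v')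
    {v v' : ι → E} (hv : v ∈ V) (hv' : v' ∈ V)
    (h : (1 - lam) * Fintype.card ι < #(agreeSet v v')) : v = v' := by
  by_contra hne
  rw [card_agreeSet] at h
  refine h.not_ge ?_
  gcongr
  exact hlam v hv v' hv' hne

theorem card_filter_lt_card_lineAgreeSet_inter_mul_le_one
    (hlam : ∀ v ∈ V, ∀ v' ∈ V, v ≠ v' → lam ≤ relDist v v')
    (hfar : ∀ v ∈ V, δ + ε < relDist a v) (hwV : ∀ x ∈ T, w x ∈ V)
    (hw : ∀ x ∈ T, relDist (a + x • b) (w x) < δ) {x y : K} (hx : x ∈ T) (hy : y ∈ T)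
    (hxy : x ≠ y) :
    #{z ∈ T | (1 - lam) * Fintype.card ι <
      #(lineAgreeSet a b w x ∩ lineAgreeSet a b w y ∩ lineAgreeSet a b w z)} * ε ≤ 1 := by
  obtain ⟨c, hc, d, hd, hcx, hcy⟩ := exists_add_smul_eq_of_ne V (hwV x hx) (hwV y hy) hxy
  refine card_mul_le_one_of_relDist_add_smul_lt (hfar c hc) (b := b) (d := d) fun z hz => ?_
  obtain ⟨hzT, hlarge⟩ := mem_filter.1 hz
  have hagree : (1 - lam) * Fintype.card ι < #(agreeSet (w z) (c + z • d)) :=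
    hlarge.trans_le (Nat.cast_le.2 (card_le_card (lineAgreeSet_inter_inter_subset hxy hcx hcy z)))
  have hline : w z = c + z • d :=
    eq_of_lt_card_agreeSet hlam (hwV z hzT) (V.add_mem hc (V.smul_mem z hd)) hagree
  rw [← hline]
  exact hw z hzT

theorem sum_card_lineAgreeSet_inter_le (hlam : ∀ v ∈ V, ∀ v' ∈ V, v ≠ v' → lam ≤ relDist v v')
    (hlam1 : lam ≤ 1) (hε : 0 < ε) (hfar : ∀ v ∈ V, δ + ε < relDist a v)
    (hwV : ∀ x ∈ T, w x ∈ V) (hw : ∀ x ∈ T, relDist (a + x • b) (w x) < δ) :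
    ∑ x ∈ T, ∑ y ∈ T, ∑ z ∈ T,
        (#(lineAgreeSet a b w x ∩ lineAgreeSet a b w y ∩ lineAgreeSet a b w z) : ℝ) ≤
      (#T ^ 2 + #T ^ 2 * (#T * (1 - lam) + 1 / ε)) * Fintype.card ι := by
  have hlam0 : 0 ≤ 1 - lam := sub_nonneg.2 hlam1
  have hdiag : ∀ x ∈ T, ∑ z ∈ T,
        (#(lineAgreeSet a b w x ∩ lineAgreeSet a b w x ∩ lineAgreeSet a b w z) : ℝ) ≤
      #T * Fintype.card ι := fun x _ =>
    (sum_le_card_nsmul _ _ _ fun z _ => Nat.cast_le.2 (card_le_univ _)).trans_eq (nsmul_eq_mul _ _)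
  have hoff : ∀ x ∈ T, ∀ y ∈ T, x ≠ y → ∑ z ∈ T,
        (#(lineAgreeSet a b w x ∩ lineAgreeSet a b w y ∩ lineAgreeSet a b w z) : ℝ) ≤
      (#T * (1 - lam) + 1 / ε) * Fintype.card ι := by
    intro x hx y hy hxy
    have hcollinear :=
      card_filter_lt_card_lineAgreeSet_inter_mul_le_one hlam hfar hwV hw hx hy hxy
    rw [← le_div_iff₀ hε] at hcollinear
    refine (sum_le_card_mul_add_card_filter_mul T (mul_nonneg hlam0 (Fintype.card ι).cast_nonneg)
      fun z _ => Nat.cast_le.2 (card_le_univ _)).trans ?_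
    rw [add_mul, mul_assoc]
    gcongr
  calc _ ≤ #T * (#T * Fintype.card ι : ℝ) +
        #T ^ 2 * ((#T * (1 - lam) + 1 / ε) * Fintype.card ι) :=
        sum_sum_le_of_diag_of_offDiag T (by positivity) hdiag hoff
    _ = _ := by ring

theorem card_pow_three_mul_le_sum_card_lineAgreeSet_inter
    (hw : ∀ x ∈ T, relDist (a + x • b) (w x) < δ) :
    (#T * (1 - δ)) ^ 3 * Fintype.card ι ≤
      ∑ x ∈ T, ∑ y ∈ T, ∑ z ∈ T,
        (#(lineAgreeSet a b w x ∩ lineAgreeSet a b w y ∩ lineAgreeSet a b w z) : ℝ) := by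
  have hcard : (0 : ℝ) < Fintype.card ι := Nat.cast_pos.2 Fintype.card_pos
  have hlarge : #T * (1 - δ) * Fintype.card ι ≤
      ((∑ x ∈ T, #(lineAgreeSet a b w x) : ℕ) : ℝ) := by
    rw [Nat.cast_sum, mul_assoc, ← nsmul_eq_mul]
    refine card_nsmul_le_sum _ _ _ fun x hx => ?_
    rw [lineAgreeSet, card_agreeSet]
    gcongr
    exact (hw x hx).le
  refine le_of_mul_le_mul_left ?_ (pow_pos hcard 2)
  calc (Fintype.card ι : ℝ) ^ 2 * ((#T * (1 - δ)) ^ 3 * Fintype.card ι)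
      = (#T * (1 - δ) * Fintype.card ι) ^ 3 := by ring
    _ ≤ ((∑ x ∈ T, #(lineAgreeSet a b w x) : ℕ) : ℝ) ^ 3 :=
        (Odd.strictMono_pow (by decide)).monotone hlarge
    _ ≤ _ := sum_card_pow_three_le T _

theorem card_le_of_forall_exists_relDist_lt_of_le_one
    (hlam : ∀ v ∈ V, ∀ v' ∈ V, v ≠ v' → lam ≤ relDist v v') (hlam1 : lam ≤ 1) (hε : 0 < ε)
    (hδ : 1 - lam + ε ≤ (1 - δ) ^ 3) (hfar : ∀ v ∈ V, δ + ε < relDist a v)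
    (hT : ∀ x ∈ T, ∃ v ∈ V, relDist (a + x • b) v < δ) : (#T : ℝ) ≤ (1 + ε) / ε ^ 2 := by
  choose! w hwV hw using hT
  obtain hT0 | hT0 := (Nat.cast_nonneg (α := ℝ) #T).eq_or_lt
  · rw [← hT0]
    positivity
  have htriple : (#T * (1 - δ)) ^ 3 ≤ (#T ^ 2 + #T ^ 2 * (#T * (1 - lam) + 1 / ε) : ℝ) :=
    le_of_mul_le_mul_right
      ((card_pow_three_mul_le_sum_card_lineAgreeSet_inter hw).trans
        (sum_card_lineAgreeSet_inter_le hlam hlam1 hε hfar hwV hw))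
      (Nat.cast_pos.2 Fintype.card_pos)
  have hcube : (#T : ℝ) ^ 3 * (1 - lam + ε) ≤ (#T * (1 - δ)) ^ 3 := by
    rw [mul_pow]
    gcongr
  have hlinear : #T * ε ≤ 1 + 1 / ε :=
    le_of_mul_le_mul_left (by linarith) (pow_pos hT0 2)
  calc (#T : ℝ) ≤ (1 + 1 / ε) / ε := (le_div_iff₀ hε).2 hlinear
    _ = (1 + ε) / ε ^ 2 := by field_simp; ring

theorem card_le_of_forall_exists_relDist_lt
    (hlam : ∀ v ∈ V, ∀ v' ∈ V, v ≠ v' → lam ≤ relDist v v') (hε : 0 < ε)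
    (hδ : 1 - lam + ε ≤ (1 - δ) ^ 3) (hfar : ∀ v ∈ V, δ + ε < relDist a v)
    (hT : ∀ x ∈ T, ∃ v ∈ V, relDist (a + x • b) v < δ) : (#T : ℝ) ≤ (1 + ε) / ε ^ 2 := by
  -- Only for the zero code can `lam` exceed `1`; there every `x ∈ T` is close to the zero line.
  obtain rfl | hV := eq_or_ne V ⊥
  · have hmul : #T * ε ≤ 1 :=
      card_mul_le_one_of_relDist_add_smul_lt (hfar 0 (zero_mem _)) (b := b) (d := 0)
        (by simpa using hT)
    rw [le_div_iff₀ (by positivity)]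
    nlinarith
  · obtain ⟨v, hv, hv0⟩ := Submodule.exists_mem_ne_zero_of_ne_bot hV
    have hlam1 : lam ≤ 1 := (hlam v hv 0 V.zero_mem hv0).trans (relDist_le_one v 0)
    exact card_le_of_forall_exists_relDist_lt_of_le_one hlam hlam1 hε hδ hfar hT

end Code

theorem le_one_sub_pow_three_of_lt_one_sub_rpow {c δ : ℝ} (hδ1 : δ ≤ 1)
    (hδ : δ < 1 - c ^ ((1 : ℝ) / 3)) : c ≤ (1 - δ) ^ 3 := by
  have hδ0 : 0 ≤ 1 - δ := sub_nonneg.2 hδ1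
  -- For `c < 0` the power in `hδ` is a junk value.
  obtain hc | hc := le_total c 0
  · exact hc.trans (by positivity)
  · have hroot : c ^ (3 : ℝ)⁻¹ ≤ 1 - δ := by
      rw [← one_div]
      linarith
    exact_mod_cast (Real.rpow_inv_le_iff_of_pos hc hδ0 three_pos).1 hroot

theorem stmt0_general {K E ι : Type*} [DivisionRing K] [AddCommGroup E] [Module K E] [Fintype ι]
    [Nonempty ι] (V : Submodule K (ι → E)) (lam ε δ : ℝ)
    (hlam : ∀ v ∈ V, ∀ v' ∈ V, v ≠ v' → lam ≤ relDist v v')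
    (hε : 0 < ε) (hδ : δ < 1 - (1 - lam + ε) ^ ((1 : ℝ) / 3))
    (ustar : ι → E) (hfar : ∀ v ∈ V, δ + ε < relDist ustar v) (u : ι → E) :
    {x : K | ∃ v ∈ V, relDist (ustar + x • u) v < δ}.Finite ∧
      ({x : K | ∃ v ∈ V, relDist (ustar + x • u) v < δ}.ncard : ℝ) ≤ (1 + ε) / ε ^ 2 := by
  have hδ1 : δ ≤ 1 := by linarith [hfar 0 V.zero_mem, relDist_le_one ustar 0]
  have hcube := le_one_sub_pow_three_of_lt_one_sub_rpow hδ1 hδ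
  exact finite_and_ncard_le_of_forall_finset_card_le fun T hT =>
    card_le_of_forall_exists_relDist_lt hlam hε hcube hfar fun x hx => hT hx

theorem stmt0 {F : Type*} [Field F] [Fintype F] {n : ℕ} (hn : 0 < n)
    (V : Submodule F (Fin n → F)) (lam ε δ : ℝ)
    (hlam : ∀ v ∈ V, ∀ v' ∈ V, v ≠ v' → lam ≤ relDist v v')
    (hε : 0 < ε) (hε3 : ε < 1/3) (hδ0 : 0 < δ)
    (hδ : δ < 1 - (1 - lam + ε) ^ ((1:ℝ)/3))
    (ustar : Fin n → F)
    (hfar : ∀ v ∈ V, δ + ε < relDist ustar v)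
    (u : Fin n → F) :
    (({x : F | ∃ v ∈ V, relDist (ustar + x • u) v < δ} : Set F).ncard : ℝ) ≤ 2 / ε ^ 2 := by
  have : Nonempty (Fin n) := Fin.pos_iff_nonempty.1 hn
  exact (stmt0_general V lam ε δ hlam hε hδ ustar hfar u).2.trans (by gcongr; linarith)
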